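/- Let Ω be a finite nonempty set and ≤ a binary relation on the powerset of Ω, and define A < B to mean A ≤ B and not B ≤ A. Then ≤ is strongly representable — i.e., there exists a probability measure μ on Ω such that A ≤ B implies μ(A) ≤ μ(B) and A < B implies μ(A) < μ(B) for all A, B ⊆ Ω — if and only if either: ≤ is symmetric and satisfies (AR): for every n ≥ 1 and sequences (A_i)_{i≤n}, (B_i)_{i≤n} such that every ω ∈ Ω belongs to strictly more B_i's than A_i's, if B_i ≤ A_i for all i < n then not B_n ≤ A_n; or ≤ is not symmetric and satisfies (S+): for all sequences (A_i)_{i≤n} ≤₀ (B_i)_{i≤n}, if B_i ≤ A_i for all i < n then not B_n < A_n. -/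

import Mathlib

open Finset

variable {Ω : Type*}

/-- The measure of a finite set of states given weights `w`: `μ(A) = ∑_{ω ∈ A} w ω`. -/
noncomputable def mea (w : Ω → ℝ) (A : Finset Ω) : ℝ := ∑ ω ∈ A, w ω

/-- `w` is a probability weight function: nonnegative and summing to 1. -/
def IsProbWeight [Fintype Ω] (w : Ω → ℝ) : Prop :=
  (∀ ω, 0 ≤ w ω) ∧ (∑ ω, w ω) = 1

/-- The measure is regular: only the empty set has measure 0. -/
def RegularW (w : Ω → ℝ) : Prop := ∀ X : Finset Ω, mea w X = 0 → X = ∅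

/-- Conditional measure `μ_A(X) = μ(A ∩ X) / μ(A)`. -/
noncomputable def condMea [DecidableEq Ω] (w : Ω → ℝ) (A X : Finset Ω) : ℝ := mea w (A ∩ X) / mea w A

/-- `X` is `(m,t)`-stable for a set function `m`: `X` is nonempty and for every `E` with
`X ∩ E ≠ ∅` and `m E > 0`, `m (X ∩ E) / m E > t`. -/
def StableFor [DecidableEq Ω] (m : Finset Ω → ℝ) (t : ℝ) (X : Finset Ω) : Prop :=
  X.Nonempty ∧ ∀ E : Finset Ω, (X ∩ E).Nonempty → 0 < m E → t < m (X ∩ E) / m E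

/-- `S` is the `⊆`-least `(m,t)`-stable set. -/
def IsLeastStable [DecidableEq Ω] (m : Finset Ω → ℝ) (t : ℝ) (S : Finset Ω) : Prop :=
  StableFor m t S ∧ ∀ X : Finset Ω, StableFor m t X → S ⊆ X

/-- `w` represents the selection function `σ` for threshold `t`. -/
def RepresentsAt [DecidableEq Ω] (w : Ω → ℝ) (t : ℝ) (σ : Finset Ω → Finset Ω) : Prop :=
  ∀ E : Finset Ω, (0 < mea w E → IsLeastStable (condMea w E) t (σ E)) ∧
    (mea w E = 0 → σ E = ∅)

/-- Selection axiom (S1): `σ(X) = ∅` only if `X = ∅`. -/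
def SelA1 (σ : Finset Ω → Finset Ω) : Prop := ∀ X : Finset Ω, σ X = ∅ → X = ∅

/-- Selection axiom (S2): `σ(X) ⊆ X`. -/
def SelA2 (σ : Finset Ω → Finset Ω) : Prop := ∀ X : Finset Ω, σ X ⊆ X

/-- Selection axiom (S3): if `σ(A) ∩ B ≠ ∅` then `σ(A ∩ B) ⊆ σ(A) ∩ B`. -/
def SelA3 [DecidableEq Ω] (σ : Finset Ω → Finset Ω) : Prop :=
  ∀ A B : Finset Ω, (σ A ∩ B).Nonempty → σ (A ∩ B) ⊆ σ A ∩ B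

/-- Selection axiom (S4ₙ) for every `n`: if `σ(A ∪ Xᵢ) = Xᵢ` for all `i`, then
`σ(A ∪ ⋃ᵢ Xᵢ) ⊆ ⋃ᵢ Xᵢ`. -/
def SelA4 [DecidableEq Ω] (σ : Finset Ω → Finset Ω) : Prop :=
  ∀ n : ℕ, ∀ A : Finset Ω, ∀ X : Fin (n + 1) → Finset Ω,
    (∀ i, σ (A ∪ X i) = X i) →
    σ (A ∪ univ.biUnion X) ⊆ univ.biUnion X

/-- `ω ≻_σ X` iff `ω ∉ X` and `σ (X ∪ {ω}) = {ω}`. -/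
def succS [DecidableEq Ω] (σ : Finset Ω → Finset Ω) (ω : Ω) (X : Finset Ω) : Prop :=
  ω ∉ X ∧ σ (X ∪ {ω}) = {ω}

/-- `X ⪰_σ ω` iff `ω ∈ X` or `σ (X ∪ {ω}) ≠ {ω}`. -/
def succeqS [DecidableEq Ω] (σ : Finset Ω → Finset Ω) (X : Finset Ω) (ω : Ω) : Prop :=
  ω ∈ X ∨ σ (X ∪ {ω}) ≠ {ω}

/-- `A ⪰*_σ B` iff either `A` is a singleton `{a}` with `a ≻_σ B`, or `B` is a singleton
`{b}` with `A ⪰_σ b`. -/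
def geStar [DecidableEq Ω] (σ : Finset Ω → Finset Ω) (A B : Finset Ω) : Prop :=
  (∃ a, A = {a} ∧ succS σ a B) ∨ (∃ b, B = {b} ∧ succeqS σ A b)

/-- Two sequences of sets are balanced: every state occurs in exactly as many `A i`'s
as `B i`'s. -/
def BalancedSeq {n : ℕ} (A B : Fin n → Finset Ω) : Prop :=
  ∀ ω : Ω, Nat.card {i // ω ∈ A i} = Nat.card {i // ω ∈ B i}

/-- `(A_i) ≤₀ (B_i)`: every state occurs in at most as many `A i`'s as `B i`'s. -/
def DomSeq {n : ℕ} (A B : Fin n → Finset Ω) : Prop :=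
  ∀ ω : Ω, Nat.card {i // ω ∈ A i} ≤ Nat.card {i // ω ∈ B i}

/-- The (Scott) axiom for the induced order `⪰*_σ`. -/
def ScottAx [DecidableEq Ω] (σ : Finset Ω → Finset Ω) : Prop :=
  ∀ n : ℕ, ∀ A B : Fin (n + 1) → Finset Ω, BalancedSeq A B →
    (∀ i, geStar σ (A i) (B i)) → ∀ i, geStar σ (B i) (A i)

/-!
Write `1_A` for the indicator of `A` in `ℚ^Ω`, and let `M` be the additive monoid generated by the
vectors `1_B - 1_A` with `A ≤ B` and by the nonnegative vectors. A representing weight is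
nonnegative on `M`, so a strong representation can exist only if neither `-1` nor `1_A - 1_B`, for
`A < B`, lies in `M`. Farkas' lemma shows that this is enough once `M` is replaced by the rational
cone it generates; but `1` and `1_B - 1_A` lie in `M` themselves, and for `x ∈ M`, clearing
denominators in `-x ∈ cone M` gives `N • (-x) ∈ M`, hence `-x = N • (-x) + (N - 1) • x ∈ M`.
Counting how often a state occurs turns `-1 ∉ M` into (AR) and `1_A - 1_B ∉ M` into (S+).
-/

section Farkas

open PointedCone

variable {K E : Type*} [Field K] [LinearOrder K] [IsStrictOrderedRing K] [AddCommGroup E]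
  [Module K E]

theorem hull_insert_eq_sup (g : E) (s : Set E) : hull K (insert g s) = hull K {g} ⊔ hull K s :=
  Submodule.span_insert g s

theorem hull_sup_le_hull_insert_sup (g : E) (s : Set E) (C : PointedCone K E) :
    hull K s ⊔ C ≤ hull K (insert g s) ⊔ C :=
  sup_le_sup_right (Submodule.span_mono (Set.subset_insert g s)) C

theorem hull_insert_le_hull_sup_span_singleton (g : E) (s : Set E) (W : Submodule K E) :
    hull K (insert g s) ⊔ (W : PointedCone K E) ≤ hull K s ⊔ (W ⊔ K ∙ g : Submodule K E) := by
  rw [hull_insert_eq_sup, ofSubmodule_sup, sup_comm (hull K {g}), sup_assoc,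
    sup_comm (W : PointedCone K E)]
  exact sup_le_sup_left (sup_le_sup_right (hull_le_span K {g}) _) _

theorem mem_hull_insert_sup_of_mem_hull_sup_span_singleton {g x : E} {s : Set E}
    {W : Submodule K E} {φ : Module.Dual K E} (hφ : ∀ y ∈ hull K s ⊔ (W : PointedCone K E), 0 ≤ φ y)
    (hg : φ g < 0) (hx : φ x < 0)
    (h : x ∈ hull K s ⊔ ((W ⊔ K ∙ g : Submodule K E) : PointedCone K E)) :
    x ∈ hull K (insert g s) ⊔ (W : PointedCone K E) := by
  obtain ⟨y, hy, z, hz, rfl⟩ := Submodule.mem_sup.1 h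
  obtain ⟨w, hw, _, hcg, rfl⟩ := Submodule.mem_sup.1 (mem_ofSubmodule_iff.1 hz)
  obtain ⟨c, rfl⟩ := Submodule.mem_span_singleton.1 hcg
  have hyw : y + w ∈ hull K s ⊔ (W : PointedCone K E) := Submodule.add_mem_sup hy hw
  have hc : 0 ≤ c := by
    have := hφ _ hyw
    simp only [map_add, map_smul, smul_eq_mul] at hx this
    by_contra! hc
    linarith [mul_pos_of_neg_of_neg hc hg]
  have hcg : c • g ∈ hull K (insert g s) :=
    Submodule.smul_mem _ (⟨c, hc⟩ : {c : K // 0 ≤ c}) (subset_hull (Set.mem_insert g s))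
  rw [← add_assoc]
  exact add_mem (hull_sup_le_hull_insert_sup g s _ hyw) (Submodule.mem_sup_left hcg)

/- The subspace `W` makes the induction work: a generator `g` on which the separating functional is
negative is moved from the cone into `W`, so that the next functional vanishes on it. -/
theorem exists_dual_nonneg_of_notMem_hull_sup {s : Set E} (hs : s.Finite) (W : Submodule K E)
    {x : E} (hx : x ∉ hull K s ⊔ (W : PointedCone K E)) :
    ∃ φ : Module.Dual K E, (∀ y ∈ hull K s ⊔ (W : PointedCone K E), 0 ≤ φ y) ∧ φ x < 0 := by
  induction s, hs using Set.Finite.induction_on generalizing W with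
  | empty =>
    simp only [Submodule.span_empty, bot_sup_eq, mem_ofSubmodule_iff] at hx ⊢
    obtain ⟨φ, hφx, hφW⟩ := Submodule.exists_le_ker_of_notMem hx
    have hφ0 : ∀ y ∈ W, φ y = 0 := fun y hy ↦ hφW hy
    rcases hφx.lt_or_gt with hneg | hpos
    · exact ⟨φ, fun y hy ↦ (hφ0 y hy).ge, hneg⟩
    · exact ⟨-φ, fun y hy ↦ by simp [hφ0 y hy], by simpa using hpos⟩
  | @insert g s _ _ ih =>
    obtain ⟨φ, hφ, hφx⟩ := ih W fun h ↦ hx (hull_sup_le_hull_insert_sup g s _ h)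
    rcases le_or_gt 0 (φ g) with hg | hg
    · refine ⟨φ, fun y hy ↦ ?_, hφx⟩
      rw [hull_insert_eq_sup, sup_assoc] at hy
      obtain ⟨_, hcg, z, hz, rfl⟩ := Submodule.mem_sup.1 hy
      obtain ⟨c, rfl⟩ := Submodule.mem_span_singleton.1 hcg
      rw [map_add, ← Nonneg.coe_smul, map_smul]
      exact add_nonneg (mul_nonneg c.2 hg) (hφ z hz)
    · obtain ⟨ψ, hψ, hψx⟩ := ih (W ⊔ K ∙ g) fun h ↦
        hx (mem_hull_insert_sup_of_mem_hull_sup_span_singleton hφ hg hφx h)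
      exact ⟨ψ, fun y hy ↦ hψ y (hull_insert_le_hull_sup_span_singleton g s W hy), hψx⟩

theorem farkas {C : PointedCone K E} (hC : C.FG) {x : E} (hx : x ∉ C) :
    ∃ φ : Module.Dual K E, (∀ y ∈ C, 0 ≤ φ y) ∧ φ x < 0 := by
  obtain ⟨s, rfl⟩ := hC
  have h := exists_dual_nonneg_of_notMem_hull_sup (K := K) s.finite_toSet ⊥ (x := x)
  simp only [Submodule.restrictScalars_bot, sup_bot_eq] at h
  exact h hx

theorem exists_dual_nonneg_and_pos {C : PointedCone K E} (hC : C.FG) {T : Set E} (hT : T.Finite)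
    (hTC : T ⊆ C) (hneg : ∀ t ∈ T, -t ∉ C) :
    ∃ φ : Module.Dual K E, (∀ y ∈ C, 0 ≤ φ y) ∧ ∀ t ∈ T, 0 < φ t := by
  choose! φ hφ hφneg using fun t ht ↦ farkas hC (hneg t ht)
  have happly (y : E) : (∑ t ∈ hT.toFinset, φ t) y = ∑ t ∈ hT.toFinset, φ t y :=
    LinearMap.sum_apply ..
  refine ⟨∑ t ∈ hT.toFinset, φ t, fun y hy ↦ ?_, fun t ht ↦ ?_⟩
  · rw [happly]
    exact sum_nonneg fun t ht ↦ hφ t (hT.mem_toFinset.1 ht) y hy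
  · rw [happly]
    exact sum_pos' (fun u hu ↦ hφ u (hT.mem_toFinset.1 hu) t (hTC ht))
      ⟨t, hT.mem_toFinset.2 ht, by simpa using hφneg t ht⟩

theorem hull_range_single_one_eq_positive {ι : Type*} [Finite ι] [DecidableEq ι] :
    hull K (Set.range fun i : ι ↦ Pi.single i (1 : K)) = positive K (ι → K) := by
  refine le_antisymm (Submodule.span_le.2 ?_) fun v hv ↦ ?_
  · rintro _ ⟨i, rfl⟩
    exact Pi.single_nonneg.2 zero_le_one
  · have := Fintype.ofFinite ι
    rw [pi_eq_sum_univ' v]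
    exact sum_mem fun i _ ↦
      Submodule.smul_mem _ (⟨v i, hv i⟩ : {c : K // 0 ≤ c}) (subset_hull ⟨i, rfl⟩)

theorem fg_positive_pi {ι : Type*} [Finite ι] : (positive K (ι → K)).FG := by
  classical
  rw [← hull_range_single_one_eq_positive]
  exact Submodule.fg_span (Set.finite_range _)

end Farkas

section ClearingDenominators

variable {E : Type*} [AddCommGroup E]

theorem exists_nsmul_mem_closure_of_mem_hull [Module ℚ E] {s : Set E} {x : E}
    (hx : x ∈ PointedCone.hull ℚ s) : ∃ N : ℕ, 0 < N ∧ N • x ∈ AddSubmonoid.closure s := by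
  induction hx using Submodule.span_induction with
  | mem x hx => exact ⟨1, one_pos, by simpa using AddSubmonoid.subset_closure hx⟩
  | zero => exact ⟨1, one_pos, by simp⟩
  | add x y _ _ hx hy =>
    obtain ⟨M, hM, hMx⟩ := hx
    obtain ⟨N, hN, hNy⟩ := hy
    refine ⟨M * N, Nat.mul_pos hM hN, ?_⟩
    rw [smul_add, mul_comm, mul_smul, mul_comm, mul_smul]
    exact add_mem (nsmul_mem hMx N) (nsmul_mem hNy M)
  | smul q x _ hx =>
    obtain ⟨N, hN, hNx⟩ := hx
    obtain ⟨q, hq⟩ := q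
    refine ⟨q.den * N, Nat.mul_pos q.den_pos hN, ?_⟩
    have hclear : (q.den * N) • q • x = q.num.toNat • N • x := by
      have hnum : (q.num.toNat : ℚ) = q * q.den := by
        rw [Rat.mul_den_eq_num]
        exact_mod_cast Int.toNat_of_nonneg (Rat.num_nonneg.2 hq)
      simp only [← Nat.cast_smul_eq_nsmul ℚ, smul_smul, hnum]
      push_cast
      ring_nf
    exact hclear ▸ nsmul_mem hNx _

theorem neg_mem_closure_of_neg_mem_hull [Module ℚ E] {s : Set E} {x : E}
    (hx : x ∈ AddSubmonoid.closure s) (hneg : -x ∈ PointedCone.hull ℚ s) :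
    -x ∈ AddSubmonoid.closure s := by
  obtain ⟨N, hN, hNx⟩ := exists_nsmul_mem_closure_of_mem_hull hneg
  obtain ⟨k, rfl⟩ := Nat.exists_eq_add_one.2 hN
  have hsplit : -x = (k + 1) • -x + k • x := by rw [add_smul, one_smul, smul_neg]; abel
  exact hsplit ▸ add_mem hNx (nsmul_mem hx k)

theorem mem_closure_union_Ici_zero [PartialOrder E] [IsOrderedAddMonoid E] {s : Set E} {x : E} :
    x ∈ AddSubmonoid.closure (s ∪ Set.Ici 0) ↔ ∃ u ∈ AddSubmonoid.closure s, u ≤ x := by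
  have hnonneg : AddSubmonoid.closure (Set.Ici (0 : E)) = AddSubmonoid.nonneg E :=
    AddSubmonoid.closure_eq (AddSubmonoid.nonneg E)
  rw [AddSubmonoid.closure_union, hnonneg, AddSubmonoid.mem_sup]
  refine exists_congr fun u ↦ and_congr_right fun _ ↦ ⟨?_, fun h ↦ ?_⟩
  · rintro ⟨p, hp, rfl⟩
    exact le_add_of_nonneg_right hp
  · exact ⟨x - u, sub_nonneg.2 h, add_sub_cancel u x⟩

end ClearingDenominators

section ComparisonVectors

/-- The vector `1_B - 1_A`, on which a weight `w` takes the value `μ(B) - μ(A)`. Its entries are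
rational so that Farkas' lemma yields multiplicities after clearing denominators. -/
noncomputable def indicatorDiff (A B : Finset Ω) : Ω → ℚ :=
  (B : Set Ω).indicator 1 - (A : Set Ω).indicator 1

/-- The vectors `1_B - 1_A` with `A ≤ B`, on which every representing weight is nonnegative. -/
def comparisonVectors (le : Finset Ω → Finset Ω → Prop) : Set (Ω → ℚ) :=
  {v | ∃ A B, le A B ∧ indicatorDiff A B = v}

/-- The additive monoid generated by the vectors `1_B - 1_A` with `A ≤ B` and the nonnegative
vectors: the linear inequalities that follow from `≤` by adding up comparisons. -/
def comparisonMonoid (le : Finset Ω → Finset Ω → Prop) : AddSubmonoid (Ω → ℚ) :=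
  AddSubmonoid.closure (comparisonVectors le ∪ Set.Ici 0)

variable {le : Finset Ω → Finset Ω → Prop}

theorem neg_indicatorDiff (A B : Finset Ω) : -indicatorDiff A B = indicatorDiff B A :=
  neg_sub _ _

theorem sum_indicatorDiff_apply {n : ℕ} (A B : Fin n → Finset Ω) (ω : Ω) :
    (∑ i, indicatorDiff (A i) (B i)) ω =
      (Nat.card {i // ω ∈ B i} : ℚ) - Nat.card {i // ω ∈ A i} := by
  classical
  simp [indicatorDiff, Set.indicator_apply, Finset.sum_apply, Fintype.card_subtype]

theorem indicatorDiff_mem_comparisonMonoid {A B : Finset Ω} (h : le A B) :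
    indicatorDiff A B ∈ comparisonMonoid le :=
  AddSubmonoid.subset_closure (.inl ⟨A, B, h, rfl⟩)

theorem mem_comparisonMonoid_of_nonneg {v : Ω → ℚ} (hv : 0 ≤ v) : v ∈ comparisonMonoid le :=
  AddSubmonoid.subset_closure (.inr hv)

theorem mem_closure_comparisonVectors {v : Ω → ℚ} :
    v ∈ AddSubmonoid.closure (comparisonVectors le) ↔
      ∃ (n : ℕ) (A B : Fin n → Finset Ω), (∀ i, le (A i) (B i)) ∧
        ∑ i, indicatorDiff (A i) (B i) = v := by
  constructor
  · intro hv
    obtain ⟨l, hl, rfl⟩ := AddSubmonoid.exists_list_of_mem_closure hv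
    choose A B hle hdiff using fun i : Fin l.length ↦ hl (l.get i) (l.get_mem i)
    exact ⟨l.length, A, B, hle, by simp only [hdiff, List.get_eq_getElem, Fin.sum_univ_getElem]⟩
  · rintro ⟨n, A, B, hle, rfl⟩
    exact sum_mem fun i _ ↦ AddSubmonoid.subset_closure ⟨A i, B i, hle i, rfl⟩

theorem mem_comparisonMonoid_iff {v : Ω → ℚ} :
    v ∈ comparisonMonoid le ↔
      ∃ (n : ℕ) (A B : Fin n → Finset Ω), (∀ i, le (A i) (B i)) ∧
        ∑ i, indicatorDiff (A i) (B i) ≤ v := by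
  simp only [comparisonMonoid, mem_closure_union_Ici_zero, mem_closure_comparisonVectors]
  constructor
  · rintro ⟨_, ⟨n, A, B, hle, rfl⟩, hv⟩
    exact ⟨n, A, B, hle, hv⟩
  · rintro ⟨n, A, B, hle, hv⟩
    exact ⟨_, ⟨n, A, B, hle, rfl⟩, hv⟩

theorem finite_comparisonVectors [Finite Ω] : (comparisonVectors le).Finite :=
  (Set.finite_range fun p : Finset Ω × Finset Ω ↦ indicatorDiff p.1 p.2).subset <| by
    rintro _ ⟨A, B, -, rfl⟩
    exact ⟨(A, B), rfl⟩

theorem hull_comparisonMonoid :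
    PointedCone.hull ℚ (comparisonMonoid le : Set (Ω → ℚ)) =
      PointedCone.hull ℚ (comparisonVectors le ∪ Set.Ici 0) :=
  Submodule.span_closure

theorem fg_hull_comparisonMonoid [Finite Ω] :
    (PointedCone.hull ℚ (comparisonMonoid le : Set (Ω → ℚ))).FG := by
  have hpos : PointedCone.hull ℚ (Set.Ici (0 : Ω → ℚ)) = PointedCone.positive ℚ (Ω → ℚ) :=
    Submodule.span_eq (PointedCone.positive ℚ (Ω → ℚ))
  have hposFG : (PointedCone.hull ℚ (Set.Ici (0 : Ω → ℚ))).FG := hpos ▸ fg_positive_pi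
  rw [hull_comparisonMonoid, PointedCone.hull, Submodule.span_union]
  exact (Submodule.fg_span finite_comparisonVectors).sup hposFG

theorem neg_mem_comparisonMonoid_of_neg_mem_hull {v : Ω → ℚ} (hv : v ∈ comparisonMonoid le)
    (hneg : -v ∈ PointedCone.hull ℚ (comparisonMonoid le : Set (Ω → ℚ))) :
    -v ∈ comparisonMonoid le := by
  rw [hull_comparisonMonoid] at hneg
  exact neg_mem_closure_of_neg_mem_hull hv hneg

theorem exists_dual_nonneg_and_pos_of_notMem_comparisonMonoid [Finite Ω]
    (h1 : -1 ∉ comparisonMonoid le)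
    (hlt : ∀ A B, le A B → ¬ le B A → -indicatorDiff A B ∉ comparisonMonoid le) :
    ∃ φ : Module.Dual ℚ (Ω → ℚ), (∀ v ∈ comparisonMonoid le, 0 ≤ φ v) ∧ 0 < φ 1 ∧
      ∀ A B, le A B → ¬ le B A → 0 < φ (indicatorDiff A B) := by
  let T : Set (Ω → ℚ) := insert 1 {v | ∃ A B, le A B ∧ ¬ le B A ∧ indicatorDiff A B = v}
  have hT : T.Finite := by
    refine .insert 1 (finite_comparisonVectors.subset (s := comparisonVectors le) ?_)
    rintro _ ⟨A, B, hAB, -, rfl⟩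
    exact ⟨A, B, hAB, rfl⟩
  have hTM : ∀ t ∈ T, t ∈ comparisonMonoid le ∧ -t ∉ comparisonMonoid le := by
    rintro _ (rfl | ⟨A, B, hAB, hBA, rfl⟩)
    · exact ⟨mem_comparisonMonoid_of_nonneg zero_le_one, h1⟩
    · exact ⟨indicatorDiff_mem_comparisonMonoid hAB, hlt A B hAB hBA⟩
  obtain ⟨φ, hφ, hφT⟩ := exists_dual_nonneg_and_pos fg_hull_comparisonMonoid hT
    (fun t ht ↦ PointedCone.subset_hull (hTM t ht).1)
    (fun t ht h ↦ (hTM t ht).2 (neg_mem_comparisonMonoid_of_neg_mem_hull (hTM t ht).1 h))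
  exact ⟨φ, fun v hv ↦ hφ v (PointedCone.subset_hull hv), hφT 1 (.inl rfl),
    fun A B hAB hBA ↦ hφT _ (.inr ⟨A, B, hAB, hBA, rfl⟩)⟩

end ComparisonVectors

section Representation

variable [Fintype Ω] {le : Finset Ω → Finset Ω → Prop}

/-- `≤` is strongly representable: some probability measure is monotone along `≤` and strictly
monotone along its asymmetric part `<`. -/
def StronglyRepresentable (le : Finset Ω → Finset Ω → Prop) : Prop :=
  ∃ w : Ω → ℝ, IsProbWeight w ∧
    (∀ A B : Finset Ω, le A B → mea w A ≤ mea w B) ∧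
    (∀ A B : Finset Ω, (le A B ∧ ¬ le B A) → mea w A < mea w B)

theorem sum_indicatorDiff_mul (w : Ω → ℝ) (A B : Finset Ω) :
    ∑ ω, (indicatorDiff A B ω : ℝ) * w ω = mea w B - mea w A := by
  classical
  simp [indicatorDiff, mea, Set.indicator_apply, sub_mul, apply_ite (Rat.cast : ℚ → ℝ)]

theorem sum_mul_nonneg_of_mem_comparisonMonoid {w : Ω → ℝ} (hw : ∀ ω, 0 ≤ w ω)
    (hle : ∀ A B, le A B → mea w A ≤ mea w B) {v : Ω → ℚ} (hv : v ∈ comparisonMonoid le) :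
    0 ≤ ∑ ω, (v ω : ℝ) * w ω := by
  induction hv using AddSubmonoid.closure_induction with
  | mem v hv =>
    rcases hv with ⟨A, B, hAB, rfl⟩ | hv
    · rw [sum_indicatorDiff_mul]
      exact sub_nonneg.2 (hle A B hAB)
    · exact sum_nonneg fun ω _ ↦ mul_nonneg (Rat.cast_nonneg.2 (hv ω)) (hw ω)
  | zero => simp
  | add u v _ _ hu hv =>
    simpa only [Pi.add_apply, Rat.cast_add, add_mul, sum_add_distrib] using add_nonneg hu hv

theorem exists_probWeight_of_dual {φ : Module.Dual ℚ (Ω → ℚ)} (hφ : ∀ v, 0 ≤ v → 0 ≤ φ v)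
    (hφ1 : 0 < φ 1) :
    ∃ w : Ω → ℝ, IsProbWeight w ∧
      ∀ A B, mea w B - mea w A = ((φ (indicatorDiff A B) / φ 1 : ℚ) : ℝ) := by
  classical
  have hsum (v : Ω → ℚ) : ∑ ω, v ω * φ (Pi.single ω 1) = φ v := by
    conv_rhs => rw [pi_eq_sum_univ' v]
    simp only [map_sum, map_smul, smul_eq_mul]
  let w (ω : Ω) : ℝ := ((φ (Pi.single ω 1) / φ 1 : ℚ) : ℝ)
  have hw (v : Ω → ℚ) : ∑ ω, (v ω : ℝ) * w ω = ((φ v / φ 1 : ℚ) : ℝ) := by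
    rw [← hsum v, sum_div]
    push_cast
    simp only [w, Rat.cast_div, mul_div_assoc]
  refine ⟨w, ⟨fun ω ↦ ?_, ?_⟩, fun A B ↦ ?_⟩
  · exact Rat.cast_nonneg.2 (div_nonneg (hφ _ (Pi.single_nonneg.2 zero_le_one)) hφ1.le)
  · simpa [div_self hφ1.ne'] using hw 1
  · rw [← sum_indicatorDiff_mul, hw]

theorem StronglyRepresentable.notMem_comparisonMonoid (h : StronglyRepresentable le) :
    -1 ∉ comparisonMonoid le ∧
      ∀ A B, le A B → ¬ le B A → -indicatorDiff A B ∉ comparisonMonoid le := by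
  obtain ⟨w, ⟨hw, hw1⟩, hle, hlt⟩ := h
  have hnonneg {v : Ω → ℚ} := sum_mul_nonneg_of_mem_comparisonMonoid hw hle (v := v)
  refine ⟨fun h ↦ ?_, fun A B hAB hBA h ↦ ?_⟩
  · have := hnonneg h
    simp only [Pi.neg_apply, Pi.one_apply, Rat.cast_neg, Rat.cast_one, neg_mul, one_mul,
      sum_neg_distrib, hw1] at this
    linarith
  · have := hnonneg h
    rw [neg_indicatorDiff, sum_indicatorDiff_mul] at this
    linarith [hlt A B ⟨hAB, hBA⟩]

theorem stronglyRepresentable_iff_notMem_comparisonMonoid :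
    StronglyRepresentable le ↔
      -1 ∉ comparisonMonoid le ∧
        ∀ A B, le A B → ¬ le B A → -indicatorDiff A B ∉ comparisonMonoid le := by
  refine ⟨StronglyRepresentable.notMem_comparisonMonoid, fun ⟨h1, hlt⟩ ↦ ?_⟩
  obtain ⟨φ, hφ, hφ1, hφlt⟩ := exists_dual_nonneg_and_pos_of_notMem_comparisonMonoid h1 hlt
  obtain ⟨w, hw, hdiff⟩ := exists_probWeight_of_dual
    (fun v hv ↦ hφ v (mem_comparisonMonoid_of_nonneg hv)) hφ1
  refine ⟨w, hw, fun A B hAB ↦ sub_nonneg.1 ?_, fun A B ⟨hAB, hBA⟩ ↦ sub_pos.1 ?_⟩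
  · rw [hdiff]
    exact Rat.cast_nonneg.2 (div_nonneg (hφ _ (indicatorDiff_mem_comparisonMonoid hAB)) hφ1.le)
  · rw [hdiff]
    exact Rat.cast_pos.2 (div_pos (hφlt A B hAB hBA) hφ1)

end Representation

section Axioms

variable {le : Finset Ω → Finset Ω → Prop}

/-- The axiom (AR). The paper's sequences of length `n ≥ 1` are indexed by `Fin (n + 1)`. -/
def AxiomAR (le : Finset Ω → Finset Ω → Prop) : Prop :=
  ∀ n : ℕ, ∀ A B : Fin (n + 1) → Finset Ω,
    (∀ ω : Ω, Nat.card {i // ω ∈ A i} < Nat.card {i // ω ∈ B i}) →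
    (∀ i : Fin n, le (B i.castSucc) (A i.castSucc)) →
    ¬ le (B (Fin.last n)) (A (Fin.last n))

/-- The axiom (S+), with `X < Y` spelled out as `X ≤ Y ∧ ¬ Y ≤ X`. -/
def AxiomSPlus (le : Finset Ω → Finset Ω → Prop) : Prop :=
  ∀ n : ℕ, ∀ A B : Fin (n + 1) → Finset Ω, DomSeq A B →
    (∀ i : Fin n, le (B i.castSucc) (A i.castSucc)) →
    ¬ (le (B (Fin.last n)) (A (Fin.last n)) ∧ ¬ le (A (Fin.last n)) (B (Fin.last n)))

theorem sum_indicatorDiff_le_neg_one_iff {n : ℕ} {A B : Fin n → Finset Ω} :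
    ∑ i, indicatorDiff (B i) (A i) ≤ -1 ↔
      ∀ ω, Nat.card {i // ω ∈ A i} < Nat.card {i // ω ∈ B i} := by
  refine forall_congr' fun ω ↦ ?_
  rw [sum_indicatorDiff_apply, Pi.neg_apply, Pi.one_apply, ← Nat.add_one_le_iff,
    ← Nat.cast_le (α := ℚ), Nat.cast_add_one]
  constructor <;> intro h <;> linarith

theorem sum_indicatorDiff_le_zero_iff_domSeq {n : ℕ} {A B : Fin n → Finset Ω} :
    ∑ i, indicatorDiff (B i) (A i) ≤ 0 ↔ DomSeq A B := by
  refine forall_congr' fun ω ↦ ?_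
  rw [sum_indicatorDiff_apply, Pi.zero_apply, sub_nonpos, Nat.cast_le]

theorem axiomAR_iff_neg_one_notMem [Nonempty Ω] : AxiomAR le ↔ -1 ∉ comparisonMonoid le := by
  rw [mem_comparisonMonoid_iff]
  constructor
  · rintro hAR ⟨n, B, A, hle, hsum⟩
    have hcard := sum_indicatorDiff_le_neg_one_iff.1 hsum
    cases n with
    | zero =>
      obtain ⟨ω⟩ := ‹Nonempty Ω›
      simpa using hcard ω
    | succ n => exact hAR n A B hcard (fun i ↦ hle i.castSucc) (hle (Fin.last n))
  · intro h n A B hcard hle hlast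
    exact h ⟨n + 1, B, A, Fin.forall_fin_succ'.2 ⟨hle, hlast⟩,
      sum_indicatorDiff_le_neg_one_iff.2 hcard⟩

theorem axiomSPlus_iff_neg_indicatorDiff_notMem :
    AxiomSPlus le ↔ ∀ A B, le A B → ¬ le B A → -indicatorDiff A B ∉ comparisonMonoid le := by
  simp only [mem_comparisonMonoid_iff, le_neg_iff_add_nonpos_right]
  constructor
  · rintro hS X Y hXY hYX ⟨n, B, A, hle, hsum⟩
    refine hS n (Fin.snoc A Y) (Fin.snoc B X) ?_ (by simpa using hle) (by simpa using ⟨hXY, hYX⟩)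
    rw [← sum_indicatorDiff_le_zero_iff_domSeq, Fin.sum_univ_castSucc]
    simpa using hsum
  · rintro h n A B hdom hle ⟨hlast, hnot⟩
    refine h _ _ hlast hnot ⟨n, fun i ↦ B i.castSucc, fun i ↦ A i.castSucc, hle, ?_⟩
    rw [← Fin.sum_univ_castSucc fun i ↦ indicatorDiff (B i) (A i)]
    exact sum_indicatorDiff_le_zero_iff_domSeq.2 hdom

theorem indicatorDiff_le_one (A B : Finset Ω) : indicatorDiff A B ≤ 1 :=
  (sub_le_self _ (Set.indicator_nonneg fun _ _ ↦ zero_le_one)).trans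
    (Set.indicator_le_self' fun _ _ ↦ zero_le_one)

theorem neg_indicatorDiff_mem_of_neg_one_mem (h : -1 ∈ comparisonMonoid le) (A B : Finset Ω) :
    -indicatorDiff A B ∈ comparisonMonoid le := by
  have hnonneg : 0 ≤ 1 - indicatorDiff A B := sub_nonneg.2 (indicatorDiff_le_one A B)
  have hsplit : -indicatorDiff A B = -1 + (1 - indicatorDiff A B) := by abel
  exact hsplit ▸ add_mem h (mem_comparisonMonoid_of_nonneg hnonneg)

theorem AxiomSPlus.axiomAR [Nonempty Ω] (hS : AxiomSPlus le)
    (hle : ¬ ∀ A B, le A B → le B A) : AxiomAR le := by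
  push Not at hle
  obtain ⟨A, B, hAB, hBA⟩ := hle
  exact axiomAR_iff_neg_one_notMem.2 fun h ↦
    axiomSPlus_iff_neg_indicatorDiff_notMem.1 hS A B hAB hBA
      (neg_indicatorDiff_mem_of_neg_one_mem h A B)

theorem axiomSPlus_of_symmetric (hle : ∀ A B, le A B → le B A) : AxiomSPlus le :=
  fun _ _ _ _ _ h ↦ h.2 (hle _ _ h.1)

theorem stronglyRepresentable_iff_axiomAR_and_axiomSPlus [Fintype Ω] [Nonempty Ω] :
    StronglyRepresentable le ↔ AxiomAR le ∧ AxiomSPlus le := by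
  rw [stronglyRepresentable_iff_notMem_comparisonMonoid, axiomAR_iff_neg_one_notMem,
    axiomSPlus_iff_neg_indicatorDiff_notMem]

end Axioms

/-- Strong representation: `≤` is strongly representable iff either it is
symmetric and satisfies (AR), or it is not symmetric and satisfies (S+), where `A < B` is
defined as `A ≤ B ∧ ¬ B ≤ A`. -/
theorem stmt4 [Fintype Ω] [Nonempty Ω] (le : Finset Ω → Finset Ω → Prop) :
    (∃ w : Ω → ℝ, IsProbWeight w ∧
        (∀ A B : Finset Ω, le A B → mea w A ≤ mea w B) ∧
        (∀ A B : Finset Ω, (le A B ∧ ¬ le B A) → mea w A < mea w B)) ↔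
      (((∀ A B : Finset Ω, le A B → le B A) ∧
          (∀ n : ℕ, ∀ A B : Fin (n + 1) → Finset Ω,
            (∀ ω : Ω, Nat.card {i // ω ∈ A i} < Nat.card {i // ω ∈ B i}) →
            (∀ i : Fin n, le (B i.castSucc) (A i.castSucc)) →
            ¬ le (B (Fin.last n)) (A (Fin.last n)))) ∨
        ((¬ ∀ A B : Finset Ω, le A B → le B A) ∧
          (∀ n : ℕ, ∀ A B : Fin (n + 1) → Finset Ω, DomSeq A B →
            (∀ i : Fin n, le (B i.castSucc) (A i.castSucc)) →
            ¬ (le (B (Fin.last n)) (A (Fin.last n)) ∧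
                ¬ le (A (Fin.last n)) (B (Fin.last n)))))) := by
  change StronglyRepresentable le ↔ (_ ∧ AxiomAR le) ∨ (_ ∧ AxiomSPlus le)
  rw [stronglyRepresentable_iff_axiomAR_and_axiomSPlus]
  by_cases hle : ∀ A B : Finset Ω, le A B → le B A
  · have hS : AxiomSPlus le := axiomSPlus_of_symmetric hle
    tauto
  · have hAR : AxiomSPlus le → AxiomAR le := fun hS ↦ hS.axiomAR hle
    tauto
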